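/- arXiv:1406.6266 — 2 statements merged into one kernel-verified Lean document; each statement's English description precedes it below -/
import Mathlib

section
/- Let Ψ be a finite set of ML(Φ)-formulas and assume Φ is nonempty. Then for every Kripke model K over Φ and every nonempty team T of K there is a formula ξ_{K,T} ∈ EMDL(Φ) such that for every Kripke model K' over Φ and every team T' of K': K',T' ⊨ ξ_{K,T} if and only if tset_Ψ(K,T) ⊄ tset_Ψ(K',T'). -/
namespace MDLTeam

/-- A Kripke model over a set `Φ` of proposition symbols: a set `W` of worlds,
an accessibility relation `R` and a valuation `V`.  A team of `K` is a subset of `K.W`. -/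
structure Kripke (Φ : Type) : Type 1 where
  W : Type
  R : W → W → Prop
  V : Φ → Set W

namespace Kripke

variable {Φ : Type}

/-- `R[T] = {v | ∃ w ∈ T, w R v}` -/
def img (K : Kripke Φ) (T : Set K.W) : Set K.W := {v | ∃ w ∈ T, K.R w v}

/-- `R⁻¹[S] = {w | ∃ v ∈ S, w R v}` -/
def pre (K : Kripke Φ) (S : Set K.W) : Set K.W := {w | ∃ v ∈ S, K.R w v}

/-- `T[R]S` iff `S ⊆ R[T]` and `T ⊆ R⁻¹[S]`. -/
def trs (K : Kripke Φ) (T S : Set K.W) : Prop := S ⊆ K.img T ∧ T ⊆ K.pre S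

end Kripke

/-- Formulas of modal logic `ML(Φ)` in negation normal form. -/
inductive MLFrm (Φ : Type) : Type
  | atom (p : Φ)
  | natom (p : Φ)
  | and (φ ψ : MLFrm Φ)
  | or (φ ψ : MLFrm Φ)
  | dia (φ : MLFrm Φ)
  | box (φ : MLFrm Φ)
  deriving DecidableEq

namespace MLFrm

variable {Φ : Type}

/-- Team semantics for `ML`. -/
def sat (K : Kripke Φ) : MLFrm Φ → Set K.W → Prop
  | atom p, T => T ⊆ K.V p
  | natom p, T => T ∩ K.V p = ∅
  | and φ ψ, T => sat K φ T ∧ sat K ψ T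
  | or φ ψ, T => ∃ T₁ T₂, T = T₁ ∪ T₂ ∧ sat K φ T₁ ∧ sat K ψ T₂
  | dia φ, T => ∃ S, K.trs T S ∧ sat K φ S
  | box φ, T => sat K φ (K.img T)

/-- Standard (pointwise) Kripke semantics for `ML`. -/
def psat (K : Kripke Φ) : MLFrm Φ → K.W → Prop
  | atom p, w => w ∈ K.V p
  | natom p, w => w ∉ K.V p
  | and φ ψ, w => psat K φ w ∧ psat K ψ w
  | or φ ψ, w => psat K φ w ∨ psat K ψ w
  | dia φ, w => ∃ v, K.R w v ∧ psat K φ v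
  | box φ, w => ∀ v, K.R w v → psat K φ v

/-- Modal depth. -/
def md : MLFrm Φ → ℕ
  | atom _ => 0
  | natom _ => 0
  | and φ ψ => max (md φ) (md ψ)
  | or φ ψ => max (md φ) (md ψ)
  | dia φ => md φ + 1
  | box φ => md φ + 1

end MLFrm

/-- Formulas of `ML(⊻)(Φ)`: modal logic with intuitionistic disjunction. -/
inductive MLI (Φ : Type) : Type
  | atom (p : Φ)
  | natom (p : Φ)
  | and (φ ψ : MLI Φ)
  | or (φ ψ : MLI Φ)
  | dia (φ : MLI Φ)
  | box (φ : MLI Φ)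
  | idis (φ ψ : MLI Φ)
  deriving DecidableEq

namespace MLI

variable {Φ : Type}

/-- Team semantics for `ML(⊻)`. -/
def sat (K : Kripke Φ) : MLI Φ → Set K.W → Prop
  | atom p, T => T ⊆ K.V p
  | natom p, T => T ∩ K.V p = ∅
  | and φ ψ, T => sat K φ T ∧ sat K ψ T
  | or φ ψ, T => ∃ T₁ T₂, T = T₁ ∪ T₂ ∧ sat K φ T₁ ∧ sat K ψ T₂
  | dia φ, T => ∃ S, K.trs T S ∧ sat K φ S
  | box φ, T => sat K φ (K.img T)
  | idis φ ψ, T => sat K φ T ∨ sat K ψ T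

/-- Modal depth. -/
def md : MLI Φ → ℕ
  | atom _ => 0
  | natom _ => 0
  | and φ ψ => max (md φ) (md ψ)
  | or φ ψ => max (md φ) (md ψ)
  | dia φ => md φ + 1
  | box φ => md φ + 1
  | idis φ ψ => max (md φ) (md ψ)

/-- The number of occurrences of the connective `⊻` in a formula. -/
def occIdis : MLI Φ → ℕ
  | atom _ => 0
  | natom _ => 0
  | and φ ψ => occIdis φ + occIdis ψ
  | or φ ψ => occIdis φ + occIdis ψ
  | dia φ => occIdis φ
  | box φ => occIdis φ
  | idis φ ψ => occIdis φ + occIdis ψ + 1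

/-- The number of symbols in a formula. -/
def size : MLI Φ → ℕ
  | atom _ => 1
  | natom _ => 2
  | and φ ψ => size φ + size ψ + 1
  | or φ ψ => size φ + size ψ + 1
  | dia φ => size φ + 1
  | box φ => size φ + 1
  | idis φ ψ => size φ + size ψ + 1

end MLI

/-- Formulas of extended modal dependence logic `EMDL(Φ)`: `ML` extended by
dependence atoms `dep(ψ₁,…,ψₙ,θ)` with `ψ₁,…,ψₙ,θ ∈ ML(Φ)`. -/
inductive EMDL (Φ : Type) : Type
  | atom (p : Φ)
  | natom (p : Φ)
  | and (φ ψ : EMDL Φ)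
  | or (φ ψ : EMDL Φ)
  | dia (φ : EMDL Φ)
  | box (φ : EMDL Φ)
  | dep (l : List (MLFrm Φ)) (θ : MLFrm Φ)

namespace EMDL

variable {Φ : Type}

/-- Team semantics for `EMDL`. -/
def sat (K : Kripke Φ) : EMDL Φ → Set K.W → Prop
  | atom p, T => T ⊆ K.V p
  | natom p, T => T ∩ K.V p = ∅
  | and φ ψ, T => sat K φ T ∧ sat K ψ T
  | or φ ψ, T => ∃ T₁ T₂, T = T₁ ∪ T₂ ∧ sat K φ T₁ ∧ sat K ψ T₂
  | dia φ, T => ∃ S, K.trs T S ∧ sat K φ S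
  | box φ, T => sat K φ (K.img T)
  | dep l θ, T => ∀ w ∈ T, ∀ v ∈ T,
      (∀ ψ ∈ l, (MLFrm.sat K ψ {w} ↔ MLFrm.sat K ψ {v})) →
      (MLFrm.sat K θ {w} ↔ MLFrm.sat K θ {v})

end EMDL

/-- `k`-bisimilarity of pointed models. -/
def bisim {Φ : Type} (K K' : Kripke Φ) : ℕ → K.W → K'.W → Prop
  | 0, w, w' => ∀ p, w ∈ K.V p ↔ w' ∈ K'.V p
  | k + 1, w, w' =>
      (∀ p, w ∈ K.V p ↔ w' ∈ K'.V p) ∧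
      (∀ v, K.R w v → ∃ v', K'.R w' v' ∧ bisim K K' k v v') ∧
      (∀ v', K'.R w' v' → ∃ v, K.R w v ∧ bisim K K' k v v')

/-- Team `k`-bisimilarity: `K,T ⇌ₖ K',T'`. -/
def tbisim {Φ : Type} (K K' : Kripke Φ) (k : ℕ) (T : Set K.W) (T' : Set K'.W) : Prop :=
  (∀ w ∈ T, ∃ w' ∈ T', bisim K K' k w w') ∧
  (∀ w' ∈ T', ∃ w ∈ T, bisim K K' k w w')

/-- `M(φ,K)`: the set of maximal teams satisfying `φ` in `K` (for `ML(⊻)`). -/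
def MLI.Mset {Φ : Type} (K : Kripke Φ) (φ : MLI Φ) : Set (Set K.W) :=
  {T | MLI.sat K φ T ∧ ∀ S, MLI.sat K φ S → T ⊆ S → S = T}

/-- `N(φ,K)`: the family of minimal teams not satisfying `φ` in `K` (for `ML(⊻)`). -/
def MLI.Nset {Φ : Type} (K : Kripke Φ) (φ : MLI Φ) : Set (Set K.W) :=
  {T | ¬ MLI.sat K φ T ∧ ∀ S, ¬ MLI.sat K φ S → S ⊆ T → S = T}

/-- The upper dimension `Dim(φ)` of an `ML(⊻)`-formula: the least `m` such that
`|M(φ,K)| ≤ m` for every Kripke model `K` over `Φ`. -/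
noncomputable def MLI.Dim {Φ : Type} (φ : MLI Φ) : ℕ :=
  sInf {m : ℕ | ∀ K : Kripke Φ, (MLI.Mset K φ).Finite ∧ (MLI.Mset K φ).ncard ≤ m}

/-- The lower dimension `dim(φ)` of an `ML(⊻)`-formula: the least `n` such that
`|T| ≤ n` for every Kripke model `K` over `Φ` and every `T ∈ N(φ,K)`. -/
noncomputable def MLI.ldim {Φ : Type} (φ : MLI Φ) : ℕ :=
  sInf {n : ℕ | ∀ K : Kripke Φ, ∀ T ∈ MLI.Nset K φ, T.Finite ∧ T.ncard ≤ n}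

/-- `M(φ,K)`: the set of maximal teams satisfying `φ` in `K` (for `EMDL`). -/
def EMDL.Mset {Φ : Type} (K : Kripke Φ) (φ : EMDL Φ) : Set (Set K.W) :=
  {T | EMDL.sat K φ T ∧ ∀ S, EMDL.sat K φ S → T ⊆ S → S = T}

/-- The upper dimension `Dim(φ)` of an `EMDL`-formula. -/
noncomputable def EMDL.Dim {Φ : Type} (φ : EMDL Φ) : ℕ :=
  sInf {m : ℕ | ∀ K : Kripke Φ, (EMDL.Mset K φ).Finite ∧ (EMDL.Mset K φ).ncard ≤ m}

/-- The `Ψ`-type of a state: `type_Ψ(K,w) = {ψ ∈ Ψ | K,w ⊨ ψ}`. -/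
def typeSet {Φ : Type} (K : Kripke Φ) (Ψ : Set (MLFrm Φ)) (w : K.W) : Set (MLFrm Φ) :=
  {ψ | ψ ∈ Ψ ∧ MLFrm.psat K ψ w}

/-- `tset_Ψ(K,T) = {type_Ψ(K,w) | w ∈ T}`. -/
def tset {Φ : Type} (K : Kripke Φ) (Ψ : Set (MLFrm Φ)) (T : Set K.W) : Set (Set (MLFrm Φ)) :=
  typeSet K Ψ '' T

/-!
Let `Γ = tset K Ψ T`, a finite nonempty set of types. A team `T'` misses some type in `Γ` iff the
states of `T'` whose type lies in `Γ` realise fewer than `|Γ|` types, i.e. iff `T'` splits into a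
part avoiding all types in `Γ` and a part realising at most `|Γ| - 1` types. Avoiding a type is
definable in `ML`; realising at most one type is the conjunction of the constancy atoms `dep(ψ)`
for `ψ ∈ Ψ`, and realising at most `n` types is the `n`-fold disjunction of that formula.
-/

section Images

variable {α β : Type*}

theorem exists_eq_union_forall_iff {p q : α → Prop} {T : Set α} :
    (∃ T₁ T₂, T = T₁ ∪ T₂ ∧ (∀ x ∈ T₁, p x) ∧ ∀ x ∈ T₂, q x) ↔ ∀ x ∈ T, p x ∨ q x := by
  constructor
  · rintro ⟨T₁, T₂, rfl, hp, hq⟩ x hx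
    exact hx.imp (hp x) (hq x)
  · intro h
    refine ⟨{x ∈ T | p x}, {x ∈ T | q x}, ?_, fun _ hx => hx.2, fun _ hx => hx.2⟩
    rw [← Set.sep_or, Set.sep_eq_self_iff_mem_true.2 h]

theorem encard_image_le_add_iff {f : α → β} {T : Set α} {m n : ℕ∞} :
    (f '' T).encard ≤ m + n ↔
      ∃ T₁ T₂, T = T₁ ∪ T₂ ∧ (f '' T₁).encard ≤ m ∧ (f '' T₂).encard ≤ n := by
  constructor
  · intro h
    rcases le_or_gt (f '' T).encard m with hm | hm
    · exact ⟨T, ∅, by simp, hm, by simp⟩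
    obtain ⟨C, hCT, rfl⟩ := Set.exists_subset_encard_eq hm.le
    refine ⟨T ∩ f ⁻¹' C, T \ f ⁻¹' C, (Set.inter_union_sdiff T _).symm, ?_, ?_⟩
    · exact Set.encard_le_encard (Set.image_subset_iff.2 Set.inter_subset_right)
    · have hdiff : f '' (T \ f ⁻¹' C) ⊆ f '' T \ C := by
        rintro _ ⟨x, hx, rfl⟩
        exact ⟨⟨x, hx.1, rfl⟩, hx.2⟩
      rw [← Set.encard_sdiff_add_encard_of_subset hCT, add_comm,
        ENat.add_le_add_iff_left hm.ne_top] at h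
      exact (Set.encard_le_encard hdiff).trans h
  · rintro ⟨T₁, T₂, rfl, h₁, h₂⟩
    rw [Set.image_union]
    exact (Set.encard_union_le _ _).trans (add_le_add h₁ h₂)

theorem not_subset_image_iff {f : α → β} {T : Set α} {Γ : Set β} (hΓ : Γ.Finite) :
    ¬ Γ ⊆ f '' T ↔
      ∃ T₁ T₂, T = T₁ ∪ T₂ ∧ Disjoint Γ (f '' T₁) ∧ (f '' T₂).encard < Γ.encard := by
  constructor
  · intro h
    refine ⟨T \ f ⁻¹' Γ, T ∩ f ⁻¹' Γ, (Set.sdiff_union_inter T _).symm, ?_, ?_⟩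
    · rw [Set.disjoint_right]
      rintro _ ⟨x, hx, rfl⟩
      exact hx.2
    · rw [Set.image_inter_preimage]
      exact (hΓ.subset Set.inter_subset_right).encard_lt_encard (Set.inter_ssubset_right_iff.2 h)
  · rintro ⟨T₁, T₂, rfl, hdisj, hlt⟩ h
    rw [Set.image_union] at h
    exact hlt.not_ge (Set.encard_le_encard (hdisj.subset_right_of_subset_union h))

end Images

section Definability

variable {Φ : Type}

theorem Kripke.exists_trs_forall_iff {K : Kripke Φ} {T : Set K.W} {p : K.W → Prop} :
    (∃ S, K.trs T S ∧ ∀ v ∈ S, p v) ↔ ∀ w ∈ T, ∃ v, K.R w v ∧ p v := by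
  constructor
  · rintro ⟨S, ⟨_, hpre⟩, hS⟩ w hw
    obtain ⟨v, hv, hwv⟩ := hpre hw
    exact ⟨v, hwv, hS v hv⟩
  · intro h
    refine ⟨{v ∈ K.img T | p v}, ⟨fun _ hv => hv.1, fun w hw => ?_⟩, fun _ hv => hv.2⟩
    obtain ⟨v, hwv, hv⟩ := h w hw
    exact ⟨v, ⟨⟨w, hw, hwv⟩, hv⟩, hwv⟩

theorem Kripke.forall_mem_img_iff {K : Kripke Φ} {T : Set K.W} {p : K.W → Prop} :
    (∀ v ∈ K.img T, p v) ↔ ∀ w ∈ T, ∀ v, K.R w v → p v :=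
  ⟨fun h w hw v hwv => h v ⟨w, hw, hwv⟩, fun h v ⟨w, hw, hwv⟩ => h w hw v hwv⟩

namespace MLFrm

theorem sat_iff_forall_psat {K : Kripke Φ} {φ : MLFrm Φ} {T : Set K.W} :
    sat K φ T ↔ ∀ w ∈ T, psat K φ w := by
  induction φ generalizing T with
  | atom p => exact Iff.rfl
  | natom p => simp only [sat, psat, ← Set.disjoint_iff_inter_eq_empty, Set.disjoint_left]
  | and φ ψ ihφ ihψ => simp only [sat, psat, ihφ, ihψ, forall₂_and]
  | or φ ψ ihφ ihψ => simp only [sat, psat, ihφ, ihψ, exists_eq_union_forall_iff]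
  | dia φ ih => simp only [sat, psat, ih, Kripke.exists_trs_forall_iff]
  | box φ ih => simp only [sat, psat, ih, Kripke.forall_mem_img_iff]

/-- The negation of an `ML`-formula, pushed to the proposition symbols to stay in negation normal
form. -/
def neg : MLFrm Φ → MLFrm Φ
  | atom p => natom p
  | natom p => atom p
  | and φ ψ => or φ.neg ψ.neg
  | or φ ψ => and φ.neg ψ.neg
  | dia φ => box φ.neg
  | box φ => dia φ.neg

@[simp]
theorem psat_neg {K : Kripke Φ} {φ : MLFrm Φ} {w : K.W} : psat K φ.neg w ↔ ¬ psat K φ w := by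
  induction φ generalizing w <;> simp [neg, psat, imp_iff_not_or, *]

/-- The contradiction `p ∧ ¬p`, for an arbitrary proposition symbol `p`. -/
noncomputable def bot [Nonempty Φ] : MLFrm Φ :=
  and (atom (Classical.arbitrary Φ)) (natom (Classical.arbitrary Φ))

@[simp]
theorem not_psat_bot [Nonempty Φ] {K : Kripke Φ} {w : K.W} : ¬ psat K bot w :=
  fun h => h.2 h.1

/-- The disjunction `⋁_{i ∈ s} φ i` in `ML`, with the disjuncts taken in an arbitrary order. -/
noncomputable def disj [Nonempty Φ] {ι : Type*} (s : Finset ι) (φ : ι → MLFrm Φ) : MLFrm Φ :=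
  (s.toList.map φ).foldr or bot

theorem psat_disj [Nonempty Φ] {ι : Type*} {s : Finset ι} {φ : ι → MLFrm Φ} {K : Kripke Φ}
    {w : K.W} : psat K (disj s φ) w ↔ ∃ i ∈ s, psat K (φ i) w := by
  simp only [disj, ← Finset.mem_toList]
  induction s.toList with
  | nil => simp
  | cons i l ih => simp [psat, ih]

open Classical in
/-- The `ML`-formula saying that the `Ψ`-type of a state is not `γ`. -/
noncomputable def typeNe [Nonempty Φ] (Ψ : Finset (MLFrm Φ)) (γ : Set (MLFrm Φ)) : MLFrm Φ :=
  disj Ψ fun ψ => if ψ ∈ γ then ψ.neg else ψ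

theorem psat_typeNe [Nonempty Φ] {Ψ : Finset (MLFrm Φ)} {γ : Set (MLFrm Φ)} (hγ : γ ⊆ Ψ)
    {K : Kripke Φ} {w : K.W} : psat K (typeNe Ψ γ) w ↔ typeSet K Ψ w ≠ γ := by
  have htype : typeSet K Ψ w = γ ↔ ∀ ψ ∈ Ψ, (psat K ψ w ↔ ψ ∈ γ) := by
    refine ⟨?_, fun h => Set.ext fun ψ => ?_⟩
    · rintro rfl ψ hψ
      exact (and_iff_right hψ).symm
    · exact ⟨fun hψ => (h ψ hψ.1).1 hψ.2, fun hψ => ⟨hγ hψ, (h ψ (hγ hψ)).2 hψ⟩⟩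
  simp only [typeNe, psat_disj, Ne, htype, not_forall, exists_prop]
  refine exists_congr fun ψ => and_congr_right fun _ => ?_
  split_ifs with hψ <;> simp [hψ]

/-- The inclusion of `ML` into `EMDL`. -/
def toEMDL : MLFrm Φ → EMDL Φ
  | atom p => .atom p
  | natom p => .natom p
  | and φ ψ => .and φ.toEMDL ψ.toEMDL
  | or φ ψ => .or φ.toEMDL ψ.toEMDL
  | dia φ => .dia φ.toEMDL
  | box φ => .box φ.toEMDL

end MLFrm

namespace EMDL

@[simp]
theorem sat_toEMDL {φ : MLFrm Φ} {K : Kripke Φ} {T : Set K.W} :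
    sat K φ.toEMDL T ↔ MLFrm.sat K φ T := by
  induction φ generalizing T <;> simp [MLFrm.toEMDL, sat, MLFrm.sat, *]

theorem sat_dep_nil {θ : MLFrm Φ} {K : Kripke Φ} {T : Set K.W} :
    sat K (dep [] θ) T ↔ ∀ w ∈ T, ∀ v ∈ T, (MLFrm.psat K θ w ↔ MLFrm.psat K θ v) := by
  simp [sat, MLFrm.sat_iff_forall_psat]

variable [Nonempty Φ]

/-- The conjunction `⋀_{i ∈ s} ξ i` in `EMDL`, with the conjuncts taken in an arbitrary order. -/
noncomputable def conj {ι : Type*} (s : Finset ι) (ξ : ι → EMDL Φ) : EMDL Φ :=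
  (s.toList.map ξ).foldr and MLFrm.bot.neg.toEMDL

theorem sat_conj {ι : Type*} {s : Finset ι} {ξ : ι → EMDL Φ} {K : Kripke Φ} {T : Set K.W} :
    sat K (conj s ξ) T ↔ ∀ i ∈ s, sat K (ξ i) T := by
  simp only [conj, ← Finset.mem_toList]
  induction s.toList with
  | nil => simp [MLFrm.sat_iff_forall_psat]
  | cons i l ih => simp [sat, ih]

/-- The formula saying that no state of a team has a `Ψ`-type in `Γ`. -/
noncomputable def avoidTypes (Ψ : Finset (MLFrm Φ)) (Γ : Finset (Set (MLFrm Φ))) : EMDL Φ :=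
  conj Γ fun γ => (MLFrm.typeNe Ψ γ).toEMDL

theorem sat_avoidTypes {Ψ : Finset (MLFrm Φ)} {Γ : Finset (Set (MLFrm Φ))}
    (hΓ : ∀ γ ∈ Γ, γ ⊆ Ψ) {K : Kripke Φ} {T : Set K.W} :
    sat K (avoidTypes Ψ Γ) T ↔ Disjoint (Γ : Set (Set (MLFrm Φ))) (tset K Ψ T) := by
  simp only [avoidTypes, sat_conj, sat_toEMDL, MLFrm.sat_iff_forall_psat, Set.disjoint_left,
    tset, Set.mem_image, not_exists, not_and, Finset.mem_coe]
  exact forall₂_congr fun γ hγ => forall₂_congr fun w _ => MLFrm.psat_typeNe (hΓ γ hγ)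

/-- The formula saying that all states of a team have the same `Ψ`-type. -/
noncomputable def constType (Ψ : Finset (MLFrm Φ)) : EMDL Φ :=
  conj Ψ fun ψ => dep [] ψ

theorem sat_constType {Ψ : Finset (MLFrm Φ)} {K : Kripke Φ} {T : Set K.W} :
    sat K (constType Ψ) T ↔ (tset K Ψ T).Subsingleton := by
  have htype (w v : K.W) : typeSet K Ψ w = typeSet K Ψ v ↔
      ∀ ψ ∈ Ψ, (MLFrm.psat K ψ w ↔ MLFrm.psat K ψ v) := by
    simp only [typeSet, Set.ext_iff, Set.mem_ofPred_eq, and_congr_right_iff, Finset.mem_coe]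
  simp only [constType, sat_conj, sat_dep_nil, tset, Set.Subsingleton, Set.forall_mem_image,
    htype]
  exact ⟨fun h w hw v hv ψ hψ => h ψ hψ w hw v hv, fun h ψ hψ w hw v hv => h hw hv ψ hψ⟩

/-- The formula saying that at most `n` different `Ψ`-types are realised in a team. -/
noncomputable def atMostTypes (Ψ : Finset (MLFrm Φ)) : ℕ → EMDL Φ
  | 0 => MLFrm.bot.toEMDL
  | n + 1 => or (atMostTypes Ψ n) (constType Ψ)

theorem sat_atMostTypes {Ψ : Finset (MLFrm Φ)} {n : ℕ} {K : Kripke Φ} {T : Set K.W} :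
    sat K (atMostTypes Ψ n) T ↔ (tset K Ψ T).encard ≤ n := by
  induction n generalizing T with
  | zero => simp [atMostTypes, MLFrm.sat_iff_forall_psat, tset, Set.eq_empty_iff_forall_notMem]
  | succ n ih =>
    simp only [atMostTypes, sat, ih, sat_constType, ← Set.encard_le_one_iff_subsingleton,
      Nat.cast_add, Nat.cast_one]
    exact encard_image_le_add_iff.symm

end EMDL

theorem tset_subset_powerset {K : Kripke Φ} {Ψ : Set (MLFrm Φ)} {T : Set K.W} :
    tset K Ψ T ⊆ 𝒫 Ψ := by
  rintro _ ⟨w, _, rfl⟩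
  exact Set.sep_subset Ψ _

end Definability

/-- For a finite set `Ψ` of `ML(Φ)`-formulas (`Φ` nonempty), every Kripke
model `K` over `Φ` and every nonempty team `T` of `K`, there is `ξ_{K,T} ∈ EMDL(Φ)` such that
`K',T' ⊨ ξ_{K,T}` iff `tset_Ψ(K,T) ⊄ tset_Ψ(K',T')`. -/
theorem exists_nonsubset_formula {Φ : Type} [Nonempty Φ]
    (Ψ : Set (MLFrm Φ)) (hΨ : Ψ.Finite)
    (K : Kripke Φ) (T : Set K.W) (hT : T.Nonempty) :
    ∃ ξ : EMDL Φ, ∀ (K' : Kripke Φ) (T' : Set K'.W),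
      EMDL.sat K' ξ T' ↔ ¬ (tset K Ψ T ⊆ tset K' Ψ T') := by
  lift Ψ to Finset (MLFrm Φ) using hΨ
  have hfin : (tset K Ψ T).Finite := Ψ.finite_toSet.finite_subsets.subset tset_subset_powerset
  obtain ⟨Γ, hΓ⟩ := hfin.exists_finset_coe
  have hΓΨ : ∀ γ ∈ Γ, γ ⊆ Ψ := fun γ hγ => tset_subset_powerset (hΓ.subset hγ)
  have hΓne : Γ.Nonempty := Finset.coe_nonempty.1 (hΓ ▸ hT.image _)
  obtain ⟨n, hn⟩ := Nat.exists_eq_succ_of_ne_zero hΓne.card_ne_zero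
  refine ⟨.or (.avoidTypes Ψ Γ) (.atMostTypes Ψ n), fun K' T' => ?_⟩
  have hlt (S : Set K'.W) :
      (tset K' Ψ S).encard ≤ n ↔ (tset K' Ψ S).encard < (Γ : Set (Set (MLFrm Φ))).encard := by
    rw [Set.encard_coe_eq_coe_finsetCard, hn, Nat.cast_succ,
      ENat.lt_add_one_iff (ENat.natCast_ne_top n)]
  simp only [EMDL.sat, EMDL.sat_avoidTypes hΓΨ, EMDL.sat_atMostTypes, hlt, ← hΓ]
  exact (not_subset_image_iff Γ.finite_toSet).symm

end MDLTeam
end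

section
/- For every formula φ ∈ ML(⊻)(Φ) there exists m ∈ ℕ such that for every Kripke model K over Φ: M(φ,K) is finite with |M(φ,K)| ≤ m, and M(φ,K) generates ‖φ‖^K, i.e., every team T with K,T ⊨ φ is contained in some maximal team S ∈ M(φ,K). In particular, the upper dimension Dim(φ) is well-defined. -/
namespace MDLTeam

/-!
In each model, the teams satisfying `φ` are the subteams of finitely many generating teams, which
are computed by recursion on `φ`. The connective `⊻` joins two generating families, `∧` and `∨`
combine their members pairwise, and the modalities act on each member separately, so the size of
the family is bounded by a number that depends on `φ` alone. The maximal teams satisfying `φ` are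
the maximal generators.
-/

theorem exists_eq_sup_and_le_iff {α : Type*} [DistribLattice α] {a x y : α} :
    (∃ b c, a = b ⊔ c ∧ b ≤ x ∧ c ≤ y) ↔ a ≤ x ⊔ y := by
  constructor
  · rintro ⟨b, c, rfl, hbx, hcy⟩
    exact sup_le_sup hbx hcy
  · intro h
    exact ⟨a ⊓ x, a ⊓ y, by rw [← inf_sup_left, inf_eq_left.2 h], inf_le_right, inf_le_right⟩

namespace Kripke

variable {Φ : Type} {K : Kripke Φ} {S T : Set K.W}

/-- The states all of whose successors lie in `S`, as in `SetRel.core`: the counterpart for `□` of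
`K.pre S`. -/
def core (K : Kripke Φ) (S : Set K.W) : Set K.W := {w | ∀ v, K.R w v → v ∈ S}

theorem img_subset_iff : K.img T ⊆ S ↔ T ⊆ K.core S :=
  ⟨fun h w hw _ hwv ↦ h ⟨w, hw, hwv⟩, fun h _ ⟨_, hw, hwv⟩ ↦ h hw _ hwv⟩

theorem pre_mono : Monotone K.pre :=
  fun _ _ h _ ⟨v, hv, hwv⟩ ↦ ⟨v, h hv, hwv⟩

theorem trs_img_inter (h : T ⊆ K.pre S) : K.trs T (K.img T ∩ S) := by
  refine ⟨Set.inter_subset_left, fun w hw ↦ ?_⟩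
  obtain ⟨v, hv, hwv⟩ := h hw
  exact ⟨v, ⟨⟨w, hw, hwv⟩, hv⟩, hwv⟩

theorem exists_trs_and_subset_iff : (∃ U, K.trs T U ∧ U ⊆ S) ↔ T ⊆ K.pre S :=
  ⟨fun ⟨_, hTU, hUS⟩ ↦ hTU.2.trans (pre_mono hUS),
    fun h ↦ ⟨K.img T ∩ S, trs_img_inter h, Set.inter_subset_right⟩⟩

end Kripke

namespace MLI

variable {Φ : Type} {K : Kripke Φ}

open Classical in
/-- A finite family of teams generating `‖φ‖^K`: a team satisfies `φ` iff it is contained in a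
member of the family. The members need not be maximal. -/
noncomputable def generators (K : Kripke Φ) : MLI Φ → Finset (Set K.W)
  | atom p => {K.V p}
  | natom p => {(K.V p)ᶜ}
  | and φ ψ => .image₂ (· ∩ ·) (generators K φ) (generators K ψ)
  | or φ ψ => .image₂ (· ∪ ·) (generators K φ) (generators K ψ)
  | dia φ => (generators K φ).image K.pre
  | box φ => (generators K φ).image K.core
  | idis φ ψ => generators K φ ∪ generators K ψ

/-- A bound, uniform in `K`, on the number of generators of `φ`, and hence on `Dim(φ)`. -/
def generatorBound : MLI Φ → ℕ
  | atom _ => 1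
  | natom _ => 1
  | and φ ψ => generatorBound φ * generatorBound ψ
  | or φ ψ => generatorBound φ * generatorBound ψ
  | dia φ => generatorBound φ
  | box φ => generatorBound φ
  | idis φ ψ => generatorBound φ + generatorBound ψ

theorem card_generators_le (K : Kripke Φ) (φ : MLI Φ) :
    (generators K φ).card ≤ generatorBound φ := by
  induction φ with
  | atom | natom => exact (Finset.card_singleton _).le
  | and _ _ ihφ ihψ | or _ _ ihφ ihψ =>
    exact (Finset.card_image₂_le ..).trans (Nat.mul_le_mul ihφ ihψ)
  | dia _ ih | box _ ih => exact Finset.card_image_le.trans ih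
  | idis _ _ ihφ ihψ => exact (Finset.card_union_le ..).trans (Nat.add_le_add ihφ ihψ)

theorem sat_iff_exists_generators_subset {φ : MLI Φ} {T : Set K.W} :
    sat K φ T ↔ ∃ S ∈ generators K φ, T ⊆ S := by
  induction φ generalizing T with
  | atom p => simp [sat, generators]
  | natom p =>
    simp [sat, generators, Set.subset_compl_iff_disjoint_right, Set.disjoint_iff_inter_eq_empty]
  | and φ ψ ihφ ihψ =>
    simp only [sat, generators, ihφ, ihψ, Finset.exists_mem_image₂, Set.subset_inter_iff]
    grind
  | or φ ψ ihφ ihψ =>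
    have subset_union_iff (S₁ S₂ : Set K.W) :
        T ⊆ S₁ ∪ S₂ ↔ ∃ T₁ T₂, T = T₁ ∪ T₂ ∧ T₁ ⊆ S₁ ∧ T₂ ⊆ S₂ :=
      exists_eq_sup_and_le_iff.symm
    simp only [sat, generators, ihφ, ihψ, Finset.exists_mem_image₂, subset_union_iff]
    grind
  | dia φ ih =>
    simp only [sat, generators, ih, Finset.exists_mem_image, ← Kripke.exists_trs_and_subset_iff]
    grind
  | box φ ih => simp only [sat, generators, ih, Finset.exists_mem_image, Kripke.img_subset_iff]
  | idis φ ψ ihφ ihψ =>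
    simp only [sat, generators, ihφ, ihψ, Finset.mem_union, or_and_right, exists_or]

theorem sat_of_mem_generators {φ : MLI Φ} {S : Set K.W} (hS : S ∈ generators K φ) : sat K φ S :=
  sat_iff_exists_generators_subset.2 ⟨S, hS, subset_rfl⟩

theorem mem_Mset_iff_maximal_sat {φ : MLI Φ} {T : Set K.W} :
    T ∈ Mset K φ ↔ Maximal (sat K φ) T := by
  simp only [maximal_subset_iff, Mset, Set.mem_ofPred_eq, eq_comm]

theorem mem_Mset_iff_maximal_mem_generators {φ : MLI Φ} {T : Set K.W} :
    T ∈ Mset K φ ↔ Maximal (· ∈ generators K φ) T := by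
  rw [mem_Mset_iff_maximal_sat]
  refine maximal_iff_maximal_of_imp_of_forall (fun S ↦ sat_of_mem_generators) fun S hS ↦ ?_
  obtain ⟨G, hG, hSG⟩ := sat_iff_exists_generators_subset.1 hS
  exact ⟨G, hSG, hG⟩

theorem Mset_subset_generators (K : Kripke Φ) (φ : MLI Φ) : Mset K φ ⊆ generators K φ :=
  fun _ hT ↦ (mem_Mset_iff_maximal_mem_generators.1 hT).prop

theorem finite_Mset (K : Kripke Φ) (φ : MLI Φ) : (Mset K φ).Finite :=
  (generators K φ).finite_toSet.subset (Mset_subset_generators K φ)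

theorem ncard_Mset_le (K : Kripke Φ) (φ : MLI Φ) : (Mset K φ).ncard ≤ generatorBound φ :=
  calc (Mset K φ).ncard
    _ ≤ (generators K φ : Set (Set K.W)).ncard := Set.ncard_le_ncard (Mset_subset_generators K φ)
    _ = (generators K φ).card := Set.ncard_coe_finset _
    _ ≤ generatorBound φ := card_generators_le K φ

theorem exists_mem_Mset_subset {φ : MLI Φ} {T : Set K.W} (hT : sat K φ T) :
    ∃ S ∈ Mset K φ, T ⊆ S := by
  obtain ⟨G, hG, hTG⟩ := sat_iff_exists_generators_subset.1 hT
  obtain ⟨S, hGS, hS⟩ := (generators K φ).exists_le_maximal hG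
  exact ⟨S, mem_Mset_iff_maximal_mem_generators.2 hS, hTG.trans hGS⟩

end MLI

/-- For every `φ ∈ ML(⊻)(Φ)` there is `m` such that for every Kripke model `K`,
`M(φ,K)` is finite with `|M(φ,K)| ≤ m` and `M(φ,K)` generates `‖φ‖^K`; in particular the
upper dimension `Dim(φ)` is well-defined. -/
theorem dim_well_defined {Φ : Type} (φ : MLI Φ) :
    ∃ m : ℕ, ∀ K : Kripke Φ,
      (MLI.Mset K φ).Finite ∧ (MLI.Mset K φ).ncard ≤ m ∧
      ∀ T : Set K.W, MLI.sat K φ T → ∃ S ∈ MLI.Mset K φ, T ⊆ S := by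
  exact ⟨φ.generatorBound, fun K ↦
    ⟨MLI.finite_Mset K φ, MLI.ncard_Mset_le K φ, fun _ ↦ MLI.exists_mem_Mset_subset⟩⟩

end MDLTeam
end
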